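/- Define for γ a parameter H(x,y) := (y−x)² − 2γ²(y+x) + γ⁴ and P(a,b,c,d) := (d+b)(c+a)/2 − a·c − b·d − γ²(a+b+c+d) + 3γ⁴. Let u : ℤ → ℝ → ℝ satisfy u' = H(u₋₁,u)H(u,u₁)(u₂−u₋₂)/(P(u₋₂,u₋₁,u,u₁)P(u₋₁,u,u₁,u₂)) at every site, with P nonvanishing along the solution. Then w(n,t) := H(u(n),u(n+1))/P(u(n−1),u(n),u(n+1),u(n+2)) − 1 satisfies w' = (w+1)( w₂(1/w₁+1)w − w(1/w₋₁+1)w₋₂ + w₁ − w₋₁ ), wherever w₁, w₋₁ ≠ 0. -/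

import Mathlib

/-!
The quad polynomial `P` is affine in each variable and invariant under rotation of its arguments,
so consecutive values of `P` along the lattice differ by `u (n + 2) - u (n - 2)` times a partial
derivative of `P`. For two affine functions `p`, `q` one has
`p(x) q(y) - p(y) q(x) = (y - x) (p q' - p' q)`; applied to `P` and a partial derivative of `P`,
whose Wronskians are the discriminants of `P`, this splits a discriminant times a difference,
divided by the product of the two values of `P`, into partial fractions. Half of the
time derivative of `H / P` thereby telescopes to the forward half of the universal equation plus a
term invariant under reversal of the lattice. The other half is its mirror image with opposite
sign, so the invariant terms cancel.
-/

section Algebra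

variable {F : Type*} [Field F]

/-- The polynomial `H` of the lattice equation, with `k` in place of `γ ^ 2`. With `P` denoting
`quadPoly k a b c d`, one has `edgeDiscr k b c = 2 (P ∂ₐ∂_d P - ∂ₐP ∂_d P)`, the discriminant of
`P` in the adjacent variables `a` and `d`. -/
def edgeDiscr (k x y : F) : F := (y - x) ^ 2 - 2 * k * (y + x) + k ^ 2

/-- The polynomial `P` of the lattice equation, with `k` in place of `γ ^ 2`. -/
def quadPoly (k a b c d : F) : F :=
  (d + b) * (c + a) / 2 - a * c - b * d - k * (a + b + c + d) + 3 * k ^ 2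

/-- The partial derivative of `quadPoly k a b c d` in `a`. By the symmetries of `quadPoly`, its
partial derivative in any variable is `quadSlope` at the other three, with the variable opposite
to the differentiated one in the middle. -/
def quadSlope (k b c d : F) : F := (b + d) / 2 - c - k

/-- The discriminant `∂ₐP ∂_c P - P ∂ₐ∂_c P` of `P = quadPoly k a b c d` in the opposite variables
`a` and `c`, which depends on `b` and `d` only. -/
def diagDiscr (k b d : F) : F := ((d - b) / 2) ^ 2 - 2 * k * (b + d) + 4 * k ^ 2

/-- The ratio `H / P`, that is, `w + 1`. -/
def edgeRatio (k a b c d : F) : F := edgeDiscr k b c / quadPoly k a b c d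

/-- The right-hand side of the lattice equation at the middle site `c`. -/
def latticeFlow (k a b c d e : F) : F :=
  edgeDiscr k b c * edgeDiscr k c d * (e - a) / (quadPoly k a b c d * quadPoly k b c d e)

/-- The contribution of the velocities `c'` and `d'` to the derivative of `edgeRatio k a b c d`.
The contribution of `b'` and `a'` is the same expression for the reversed arguments. -/
def rightVariation (k a b c d c' d' : F) : F :=
  ((2 * quadSlope k a b c * diagDiscr k b d - quadPoly k a b c d * quadSlope k b c d) * c'
    - edgeDiscr k b c * quadSlope k a b c * d') / quadPoly k a b c d ^ 2

variable (k a b c d e f : F)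

theorem edgeDiscr_comm : edgeDiscr k b a = edgeDiscr k a b := by
  unfold edgeDiscr; ring

theorem quadPoly_reverse : quadPoly k d c b a = quadPoly k a b c d := by
  unfold quadPoly; ring

theorem quadPoly_rotate : quadPoly k d a b c = quadPoly k a b c d := by
  unfold quadPoly; ring

theorem quadSlope_reverse : quadSlope k c b a = quadSlope k a b c := by
  unfold quadSlope; ring

theorem edgeRatio_reverse : edgeRatio k d c b a = edgeRatio k a b c d := by
  rw [edgeRatio, edgeRatio, edgeDiscr_comm, quadPoly_reverse]

theorem latticeFlow_reverse :
    latticeFlow k e d c b a = -latticeFlow k a b c d e := by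
  unfold latticeFlow
  rw [edgeDiscr_comm k c d, edgeDiscr_comm k b c, quadPoly_reverse k b c d e,
    quadPoly_reverse k a b c d]
  ring

theorem rightVariation_neg (c' d' : F) :
    rightVariation k a b c d (-c') (-d') = -rightVariation k a b c d c' d' := by
  unfold rightVariation; ring

theorem quadPoly_sub_quadPoly :
    quadPoly k b c d e - quadPoly k a b c d = quadSlope k b c d * (e - a) := by
  unfold quadPoly quadSlope; ring

variable [NeZero (2 : F)]

theorem edgeDiscr_eq_sub :
    edgeDiscr k b c = quadPoly k a b c d - 2 * quadSlope k a b c * quadSlope k b c d := by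
  unfold edgeDiscr quadPoly quadSlope
  field_simp
  ring

theorem diagDiscr_eq_add :
    diagDiscr k b d = quadPoly k a b c d + quadSlope k b c d * quadSlope k b a d := by
  unfold diagDiscr quadPoly quadSlope
  field_simp
  ring

theorem diagDiscr_mul_sub :
    diagDiscr k b d * (e - a) =
      quadSlope k b a d * quadPoly k b c d e - quadPoly k a b c d * quadSlope k b e d := by
  have hslope : quadSlope k b a d - quadSlope k b e d = e - a := by unfold quadSlope; ring
  linear_combination (e - a) * diagDiscr_eq_add k a b c d
    - quadSlope k b a d * quadPoly_sub_quadPoly k a b c d e - quadPoly k a b c d * hslope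

theorem edgeDiscr_mul_sub :
    edgeDiscr k d e * (f - b) =
      2 * (quadSlope k d e f * quadPoly k b c d e - quadPoly k c d e f * quadSlope k b e d) := by
  have hslope : 2 * (quadSlope k d e f - quadSlope k b e d) = f - b := by
    unfold quadSlope
    field_simp
    ring
  linear_combination (f - b) * edgeDiscr_eq_sub k c d e f
    + 2 * quadSlope k d e f * quadPoly_sub_quadPoly k b c d e f - quadPoly k c d e f * hslope

-- Both sides are the numerator of the partial derivative of `edgeRatio k a b c d` in `c`.
theorem quadPoly_mul_sub_edgeDiscr_mul :
    quadPoly k a b c d * (2 * (c - b) - 2 * k) - edgeDiscr k b c * quadSlope k b a d =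
      2 * quadSlope k a b c * diagDiscr k b d - quadPoly k a b c d * quadSlope k b c d := by
  have hslope : 2 * (c - b) - 2 * k - quadSlope k b a d =
      2 * quadSlope k a b c - quadSlope k b c d := by
    unfold quadSlope
    field_simp
    ring
  linear_combination quadPoly k a b c d * hslope
    - quadSlope k b a d * edgeDiscr_eq_sub k a b c d
    - 2 * quadSlope k a b c * diagDiscr_eq_add k a b c d

variable {k x y a b c d e f : F}

theorem edgeRatio_sub_one (h : quadPoly k a b c d ≠ 0) :
    edgeRatio k a b c d - 1 =
      -2 * quadSlope k a b c * quadSlope k b c d / quadPoly k a b c d := by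
  rw [edgeRatio, div_sub_one h, edgeDiscr_eq_sub k a b c d]
  ring

theorem edgeRatio_sub_one_mul_mul (h₀ : quadPoly k a b c d ≠ 0)
    (h₁ : quadPoly k b c d e ≠ 0) (h₂ : quadPoly k c d e f ≠ 0)
    (hw : edgeRatio k b c d e - 1 ≠ 0) :
    (edgeRatio k c d e f - 1) * (1 / (edgeRatio k b c d e - 1) + 1)
        * (edgeRatio k a b c d - 1) =
      -2 * quadSlope k a b c * quadSlope k d e f * edgeDiscr k c d
        / (quadPoly k a b c d * quadPoly k c d e f) := by
  rw [div_add_one hw, add_sub_cancel, edgeRatio_sub_one h₀, edgeRatio_sub_one h₂]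
  rw [edgeRatio_sub_one h₁] at hw ⊢
  have hleft : quadSlope k b c d ≠ 0 := by intro h; simp [h] at hw
  have hright : quadSlope k c d e ≠ 0 := by intro h; simp [h] at hw
  have htwo : (2 : F) ≠ 0 := two_ne_zero
  unfold edgeRatio
  field_simp

theorem rightVariation_latticeFlow (h₀ : quadPoly k a b c d ≠ 0)
    (h₁ : quadPoly k b c d e ≠ 0) (h₂ : quadPoly k c d e f ≠ 0) :
    rightVariation k a b c d (latticeFlow k a b c d e) (latticeFlow k b c d e f) =
      edgeRatio k a b c d * (edgeRatio k b c d e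
        - 2 * quadSlope k a b c * quadSlope k d e f * edgeDiscr k c d
          / (quadPoly k a b c d * quadPoly k c d e f)
        - edgeDiscr k a b * edgeDiscr k c d / quadPoly k a b c d ^ 2) := by
  have hdiag : diagDiscr k b d * (e - a) / (quadPoly k a b c d * quadPoly k b c d e) =
      quadSlope k b a d / quadPoly k a b c d - quadSlope k b e d / quadPoly k b c d e := by
    rw [div_sub_div _ _ h₀ h₁, diagDiscr_mul_sub k a b c d e]
  have hedge : edgeDiscr k d e * (f - b) / (quadPoly k b c d e * quadPoly k c d e f) =
      2 * (quadSlope k d e f / quadPoly k c d e f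
        - quadSlope k b e d / quadPoly k b c d e) := by
    rw [div_sub_div _ _ h₂ h₁, edgeDiscr_mul_sub k b c d e f]
    ring
  have hslope : quadSlope k b c d * (e - a) / quadPoly k b c d e =
      1 - quadPoly k a b c d / quadPoly k b c d e := by
    rw [← quadPoly_sub_quadPoly k a b c d e, sub_div, div_self h₁]
  have hdiscr : edgeDiscr k a b / quadPoly k a b c d =
      1 - 2 * quadSlope k b a d * quadSlope k a b c / quadPoly k a b c d := by
    rw [edgeDiscr_eq_sub k d a b c, quadPoly_rotate k a b c d, quadSlope_reverse k b a d, sub_div,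
      div_self h₀]
  calc
    _ = edgeRatio k a b c d * (edgeDiscr k c d / quadPoly k a b c d)
          * (2 * quadSlope k a b c
              * (diagDiscr k b d * (e - a) / (quadPoly k a b c d * quadPoly k b c d e))
            - quadSlope k b c d * (e - a) / quadPoly k b c d e
            - quadSlope k a b c
              * (edgeDiscr k d e * (f - b) / (quadPoly k b c d e * quadPoly k c d e f))) := by
      unfold rightVariation latticeFlow edgeRatio
      field_simp
    _ = edgeRatio k a b c d * (edgeDiscr k c d / quadPoly k a b c d)
          * (quadPoly k a b c d / quadPoly k b c d e
            - 2 * quadSlope k a b c * quadSlope k d e f / quadPoly k c d e f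
            - edgeDiscr k a b / quadPoly k a b c d) := by
      rw [hdiag, hslope, hedge, hdiscr]
      ring
    _ = _ := by
      unfold edgeRatio
      field_simp

theorem rightVariation_add_rightVariation_reverse (hl₂ : quadPoly k x y a b ≠ 0)
    (hl₁ : quadPoly k y a b c ≠ 0) (h₀ : quadPoly k a b c d ≠ 0)
    (hr₁ : quadPoly k b c d e ≠ 0) (hr₂ : quadPoly k c d e f ≠ 0)
    (hwl : edgeRatio k y a b c - 1 ≠ 0) (hwr : edgeRatio k b c d e - 1 ≠ 0) :
    rightVariation k a b c d (latticeFlow k a b c d e) (latticeFlow k b c d e f)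
        + rightVariation k d c b a (latticeFlow k y a b c d) (latticeFlow k x y a b c) =
      edgeRatio k a b c d *
        ((edgeRatio k c d e f - 1) * (1 / (edgeRatio k b c d e - 1) + 1)
            * (edgeRatio k a b c d - 1)
          - (edgeRatio k a b c d - 1) * (1 / (edgeRatio k y a b c - 1) + 1)
            * (edgeRatio k x y a b - 1)
          + (edgeRatio k b c d e - 1) - (edgeRatio k y a b c - 1)) := by
  have hright := rightVariation_latticeFlow h₀ hr₁ hr₂
  have hwright := edgeRatio_sub_one_mul_mul h₀ hr₁ hr₂ hwr
  rw [← quadPoly_reverse] at hl₂ hl₁ h₀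
  rw [← edgeRatio_reverse] at hwl
  have hleft := rightVariation_latticeFlow h₀ hl₁ hl₂
  have hwleft := edgeRatio_sub_one_mul_mul h₀ hl₁ hl₂ hwl
  rw [latticeFlow_reverse k y a b c d, latticeFlow_reverse k x y a b c, rightVariation_neg]
    at hleft
  simp only [edgeRatio_reverse k x y a b, edgeRatio_reverse k y a b c,
    edgeRatio_reverse k a b c d, quadPoly_reverse k a b c d, edgeDiscr_comm k a b,
    edgeDiscr_comm k c d] at hleft hwleft
  linear_combination hright - hleft - edgeRatio k a b c d * (hwright - hwleft)

end Algebra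

section Calculus

variable {𝕜 F : Type*} [NontriviallyNormedField 𝕜] [NontriviallyNormedField F]
  [NormedAlgebra 𝕜 F] {a b c d : 𝕜 → F} {a' b' c' d' : F} {t : 𝕜}

theorem hasDerivAt_edgeDiscr (k : F) (hb : HasDerivAt b b' t) (hc : HasDerivAt c c' t) :
    HasDerivAt (fun s => edgeDiscr k (b s) (c s))
      (2 * (c t - b t) * (c' - b') - 2 * k * (c' + b')) t := by
  have h := (((hc.fun_sub hb).fun_pow 2).fun_sub
    ((hc.fun_add hb).const_mul (2 * k))).add_const (k ^ 2)
  exact h.congr_deriv (by norm_num)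

theorem hasDerivAt_quadPoly (k : F) (ha : HasDerivAt a a' t)
    (hb : HasDerivAt b b' t) (hc : HasDerivAt c c' t) (hd : HasDerivAt d d' t) :
    HasDerivAt (fun s => quadPoly k (a s) (b s) (c s) (d s))
      (quadSlope k (b t) (c t) (d t) * a' + quadSlope k (a t) (d t) (c t) * b'
        + quadSlope k (b t) (a t) (d t) * c' + quadSlope k (a t) (b t) (c t) * d') t := by
  have h := ((((((hd.fun_add hb).fun_mul (hc.fun_add ha)).div_const 2).fun_sub
    (ha.fun_mul hc)).fun_sub (hb.fun_mul hd)).fun_sub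
    ((((ha.fun_add hb).fun_add hc).fun_add hd).const_mul k)).add_const (3 * k ^ 2)
  refine h.congr_deriv ?_
  unfold quadSlope
  ring

theorem hasDerivAt_edgeRatio [NeZero (2 : F)] {k : F} (ha : HasDerivAt a a' t)
    (hb : HasDerivAt b b' t) (hc : HasDerivAt c c' t) (hd : HasDerivAt d d' t)
    (h₀ : quadPoly k (a t) (b t) (c t) (d t) ≠ 0) :
    HasDerivAt (fun s => edgeRatio k (a s) (b s) (c s) (d s))
      (rightVariation k (a t) (b t) (c t) (d t) c' d'
        + rightVariation k (d t) (c t) (b t) (a t) b' a') t := by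
  refine ((hasDerivAt_edgeDiscr k hb hc).fun_div (hasDerivAt_quadPoly k ha hb hc hd)
    h₀).congr_deriv ?_
  have hright := quadPoly_mul_sub_edgeDiscr_mul k (a t) (b t) (c t) (d t)
  have hleft := quadPoly_mul_sub_edgeDiscr_mul k (d t) (c t) (b t) (a t)
  unfold rightVariation
  rw [← hright, ← hleft, quadPoly_reverse k (a t), edgeDiscr_comm k (b t),
    quadSlope_reverse k (a t) (d t), quadSlope_reverse k (b t) (c t), ← add_div]
  congr 1
  ring

theorem stmt15_general [NeZero (2 : F)] {k : F} {u w : ℤ → 𝕜 → F} {n : ℤ} {t : 𝕜}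
    (hP : ∀ m, quadPoly k (u (m - 1) t) (u m t) (u (m + 1) t) (u (m + 2) t) ≠ 0)
    (hu : ∀ m, HasDerivAt (u m)
      (latticeFlow k (u (m - 2) t) (u (m - 1) t) (u m t) (u (m + 1) t) (u (m + 2) t)) t)
    (hw : ∀ m s, w m s =
      edgeRatio k (u (m - 1) s) (u m s) (u (m + 1) s) (u (m + 2) s) - 1)
    (hwr : w (n + 1) t ≠ 0) (hwl : w (n - 1) t ≠ 0) :
    HasDerivAt (w n)
      ((w n t + 1) * (w (n + 2) t * (1 / w (n + 1) t + 1) * w n t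
        - w n t * (1 / w (n - 1) t + 1) * w (n - 2) t
        + w (n + 1) t - w (n - 1) t)) t := by
  have hder := (hasDerivAt_edgeRatio (hu (n - 1)) (hu n) (hu (n + 1)) (hu (n + 2))
    (hP n)).sub_const 1
  rw [← funext (hw n)] at hder
  refine hder.congr_deriv ?_
  have hl₂ := hP (n - 2)
  have hl₁ := hP (n - 1)
  have hr₁ := hP (n + 1)
  have hr₂ := hP (n + 2)
  rw [hw] at hwl hwr
  simp only [hw, sub_add_cancel]
  simp only [Int.sub_eq_add_neg, Int.add_assoc, Int.reduceNeg, Int.reduceAdd, Int.add_zero]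
    at hl₂ hl₁ hr₁ hr₂ hwl hwr ⊢
  exact rightVariation_add_rightVariation_reverse hl₂ hl₁ (hP n) hr₁ hr₂ hwl hwr

end Calculus

/-- The substitution w = H/P − 1 maps solutions of the rational case (Qut-rat) of
the lattice equation (HPut) to solutions of the universal equation (wt). -/
theorem stmt15 (γ : ℝ)
    (H : ℝ → ℝ → ℝ) (P : ℝ → ℝ → ℝ → ℝ → ℝ)
    (hH : ∀ x y, H x y = (y - x) ^ 2 - 2 * γ ^ 2 * (y + x) + γ ^ 4)
    (hP : ∀ a b c d, P a b c d = (d + b) * (c + a) / 2 - a * c - b * d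
      - γ ^ 2 * (a + b + c + d) + 3 * γ ^ 4)
    (u : ℤ → ℝ → ℝ)
    (hPne : ∀ (n : ℤ) (t : ℝ),
      P (u (n - 1) t) (u n t) (u (n + 1) t) (u (n + 2) t) ≠ 0)
    (hu : ∀ (n : ℤ) (t : ℝ), HasDerivAt (u n)
      (H (u (n - 1) t) (u n t) * H (u n t) (u (n + 1) t)
          * (u (n + 2) t - u (n - 2) t)
        / (P (u (n - 2) t) (u (n - 1) t) (u n t) (u (n + 1) t)
          * P (u (n - 1) t) (u n t) (u (n + 1) t) (u (n + 2) t))) t)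
    (w : ℤ → ℝ → ℝ)
    (hw : ∀ (n : ℤ) (t : ℝ), w n t = H (u n t) (u (n + 1) t)
      / P (u (n - 1) t) (u n t) (u (n + 1) t) (u (n + 2) t) - 1)
    (n : ℤ) (t : ℝ) (h1 : w (n + 1) t ≠ 0) (hm1 : w (n - 1) t ≠ 0) :
    HasDerivAt (w n)
      ((w n t + 1) * (w (n + 2) t * (1 / w (n + 1) t + 1) * w n t
        - w n t * (1 / w (n - 1) t + 1) * w (n - 2) t
        + w (n + 1) t - w (n - 1) t)) t := by
  obtain ⟨rfl, rfl⟩ : H = edgeDiscr (γ ^ 2) ∧ P = quadPoly (γ ^ 2) := by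
    constructor <;> ext <;> simp only [hH, hP, edgeDiscr, quadPoly] <;> ring
  exact stmt15_general (fun m => hPne m t) (fun m => hu m t) hw h1 hm1
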